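/- Second-order Herglotz Euler–Lagrange equation: If x ∈ C⁴([a,b],ℝ) extremizes z(b) where ż = L(t,x,ẋ,ẍ,z), z(a) = γ, with x(a), ẋ(a), x(b), ẋ(b) fixed, then L_x + L_z L_ẋ - (d/dt)L_ẋ + L_z² L_ẍ - 2 L_z (d/dt)L_ẍ - ((d/dt)L_z) L_ẍ + (d²/dt²)L_ẍ = 0 on [a,b], where all partial derivatives of L are evaluated at (t,x(t),ẋ(t),ẍ(t),z(t)). -/

import Mathlib

/-!
Let `η` vanish near `a` and `b`, and let `w_s` solve `ẇ = L(t, y, ẏ, ÿ, w)`, `w(a) = γ` for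
`y = x + s η`. The derivative `ζ` of `w_s` at `s = 0` satisfies `ζ(a) = 0` and
`ζ' = L_z ζ + L_x η + L_ẋ η' + L_ẍ η''`, so with `λ = exp (-∫ L_z)` one has
`λ(b) ζ(b) = ∫ λ (L_x η + L_ẋ η' + L_ẍ η'')`, and extremality forces `ζ(b) = 0`. Integration by
parts and the fundamental lemma give `λ L_x - (λ L_ẋ)' + (λ L_ẍ)'' = 0`; expand with
`λ' = -L_z λ` and divide by `λ`. Differentiability of `w_s` in `s` is Grönwall's inequality, applied
to `w_s` and the approximate solution `z + s ζ`.
-/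

open Set Filter Metric MeasureTheory
open scoped Topology ContDiff NNReal

section ParametricODE

variable {E : Type*} [NormedAddCommGroup E] [NormedSpace ℝ E] {a b : ℝ}

theorem exists_forall_mem_Icc_hasDerivAt_of_lipschitzWith [CompleteSpace E] (hab : a ≤ b)
    {f : ℝ → E → E} {C K : ℝ≥0} (hf : ∀ w, Continuous fun t ↦ f t w)
    (hK : ∀ t, LipschitzWith K (f t)) (hC : ∀ t w, ‖f t w‖ ≤ C) (w₀ : E) :
    ∃ w : ℝ → E, w a = w₀ ∧ ∀ t ∈ Icc a b, HasDerivAt w (f t (w t)) t := by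
  have ha : a ∈ Icc (a - 1) (b + 1) := ⟨by linarith, by linarith⟩
  have hpl : IsPicardLindelof f (⟨a, ha⟩ : Icc (a - 1) (b + 1)) w₀
      (C * Real.toNNReal (b + 1 - a)) 0 C K :=
    { lipschitzOnWith := fun t _ ↦ (hK t).lipschitzOnWith
      continuousOn := fun w _ ↦ (hf w).continuousOn
      norm_le := fun t _ w _ ↦ hC t w
      mul_max_le := by
        simp [max_eq_left (by linarith : (1 : ℝ) ≤ b + 1 - a),
          max_eq_left (by linarith : 0 ≤ b + 1 - a)] }
  obtain ⟨w, hwa, hw⟩ := hpl.exists_eq_forall_mem_Icc_hasDerivWithinAt₀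
  exact ⟨w, hwa, fun t ht ↦ (hw t ⟨by linarith [ht.1], by linarith [ht.2]⟩).hasDerivAt
    (Icc_mem_nhds (by linarith [ht.1]) (by linarith [ht.2]))⟩

theorem eventually_forall_mem_norm_sub_sub_smul_fderiv_le {X Y : Type*}
    [NormedAddCommGroup X] [NormedSpace ℝ X] [NormedAddCommGroup Y] [NormedSpace ℝ Y]
    {f : X → Y} (hf : ContDiff ℝ 1 f) {S : Set (X × X)} (hS : IsCompact S) {c : ℝ} (hc : 0 < c) :
    ∀ᶠ s in 𝓝 (0 : ℝ), ∀ q ∈ S,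
      ‖f (q.1 + s • q.2) - f q.1 - s • fderiv ℝ f q.1 q.2‖ ≤ c * |s| := by
  set ψ : ℝ × X × X → Y := fun r ↦ fderiv ℝ f (r.2.1 + r.1 • r.2.2) r.2.2 - fderiv ℝ f r.2.1 r.2.2
  have hψ : Continuous ψ := by
    have : Continuous (fderiv ℝ f) := hf.continuous_fderiv one_ne_zero
    fun_prop
  have hψ_small : ∀ᶠ s in 𝓝 (0 : ℝ), ∀ q ∈ S, ‖ψ (s, q)‖ < c :=
    hS.eventually_forall_of_forall_eventually fun q _ ↦
      (hψ.norm.tendsto (0, q)).eventually_lt_const (by simpa [ψ] using hc)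
  obtain ⟨ε, hε, hball⟩ := Metric.eventually_nhds_iff_ball.1 hψ_small
  filter_upwards [ball_mem_nhds 0 hε] with s hs q hq
  have hderiv (r : ℝ) :
      HasDerivAt (fun r ↦ f (q.1 + r • q.2) - r • fderiv ℝ f q.1 q.2) (ψ (r, q)) r := by
    have hline : HasDerivAt (fun r : ℝ ↦ q.1 + r • q.2) q.2 r := by
      simpa using ((hasDerivAt_id r).smul_const q.2).const_add q.1
    exact (((hf.differentiable one_ne_zero _).hasFDerivAt.comp_hasDerivAt r hline).sub
      ((hasDerivAt_id r).smul_const (fderiv ℝ f q.1 q.2))).congr_deriv (by simp [ψ])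
  have hmvt := (convex_ball (0 : ℝ) ε).norm_image_sub_le_of_norm_hasDerivWithin_le
    (fun r _ ↦ (hderiv r).hasDerivWithinAt) (fun r hr ↦ (hball r hr q hq).le)
    (mem_ball_self hε) hs
  simpa [sub_right_comm] using hmvt

theorem eventually_forall_norm_sub_sub_smul_le {G : ℝ × ℝ × E → E} (hG : ContDiff ℝ 1 G) {K : ℝ≥0}
    (hK : LipschitzWith K G) {z ζ : ℝ → E} {W : ℝ → ℝ → E}
    (hz : IsIntegralCurveOn z (fun t w ↦ G (0, t, w)) (Icc a b))
    (hζ : IsIntegralCurveOn ζ (fun t h ↦ fderiv ℝ G (0, t, z t) (1, 0, h)) (Icc a b))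
    (hζa : ζ a = 0) (hWa : ∀ s, W s a = z a)
    (hW : ∀ s, IsIntegralCurveOn (W s) (fun t w ↦ G (s, t, w)) (Icc a b)) {c : ℝ} (hc : 0 < c) :
    ∀ᶠ s in 𝓝 (0 : ℝ), ∀ t ∈ Icc a b, ‖W s t - z t - s • ζ t‖ ≤ c * |s| := by
  have hcurve : IsCompact ((fun t ↦ ((0, t, z t), (1, 0, ζ t))) '' Icc a b :
      Set ((ℝ × ℝ × E) × (ℝ × ℝ × E))) := by
    have := hz.continuousOn
    have := hζ.continuousOn
    exact isCompact_Icc.image_of_continuousOn (by fun_prop)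
  set M : ℝ := gronwallBound 0 K 1 (b - a)
  have hM_linear (ε : ℝ) : gronwallBound 0 K ε (b - a) = ε * M := by
    simp only [M, gronwallBound]
    split_ifs <;> ring
  have hε : 0 < c / (|M| + 1) := by positivity
  filter_upwards [eventually_forall_mem_norm_sub_sub_smul_fderiv_le hG hcurve hε] with s hs t ht
  have hright {w : ℝ → E} {w' : E} {r : ℝ} (hr : r ∈ Ico a b)
      (h : HasDerivWithinAt w w' (Icc a b) r) : HasDerivWithinAt w w' (Ici r) r :=
    h.mono_of_mem_nhdsWithin (Icc_mem_nhdsGE_of_mem hr)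
  have hgronwall : dist (W s t) (z t + s • ζ t) ≤
      gronwallBound 0 K (0 + c / (|M| + 1) * |s|) (t - a) := by
    refine dist_le_of_approx_trajectories_ODE (v := fun t w ↦ G (s, t, w))
      (fun t ↦ by simpa using! hK.comp ((LipschitzWith.prodMk_left s).comp
        (LipschitzWith.prodMk_left t)))
      (hW s).continuousOn (fun r hr ↦ hright hr (hW s r (Ico_subset_Icc_self hr))) (by simp)
      (hz.continuousOn.add (hζ.continuousOn.const_smul s))
      (fun r hr ↦ hright hr ((hz r (Ico_subset_Icc_self hr)).add
        ((hζ r (Ico_subset_Icc_self hr)).const_smul s))) (fun r hr ↦ ?_) (by simp [hWa, hζa]) t ht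
    simpa [dist_comm, dist_eq_norm, sub_sub] using hs _ ⟨r, Ico_subset_Icc_self hr, rfl⟩
  calc ‖W s t - z t - s • ζ t‖ = dist (W s t) (z t + s • ζ t) := by rw [dist_eq_norm, sub_sub]
    _ ≤ gronwallBound 0 K (c / (|M| + 1) * |s|) (b - a) := by
      rw [zero_add] at hgronwall
      exact hgronwall.trans
        (gronwallBound_mono le_rfl (by positivity) K.2 (sub_le_sub_right ht.2 a))
    _ = c * |s| * (M / (|M| + 1)) := by rw [hM_linear]; ring
    _ ≤ c * |s| := mul_le_of_le_one_right (by positivity)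
      ((div_le_one (by positivity)).2 (by linarith [le_abs_self M]))

theorem eventually_forall_norm_sub_le_of_norm_sub_sub_smul_le {ι : Type*} {S : Set ι}
    {z ζ : ι → E} {W : ℝ → ι → E} {C M : ℝ}
    (hW : ∀ᶠ s in 𝓝 (0 : ℝ), ∀ t ∈ S, ‖W s t - z t - s • ζ t‖ ≤ C * |s|)
    (hζ : ∀ t ∈ S, ‖ζ t‖ ≤ M) {ε : ℝ} (hε : 0 < ε) :
    ∀ᶠ s in 𝓝 (0 : ℝ), ∀ t ∈ S, ‖W s t - z t‖ ≤ ε := by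
  have hsmall : ∀ᶠ s in 𝓝 (0 : ℝ), C * |s| + |s| * M < ε :=
    (Continuous.tendsto (by fun_prop) 0).eventually_lt_const (by simpa using hε)
  filter_upwards [hW, hsmall] with s hs hsε t ht
  calc ‖W s t - z t‖ ≤ ‖W s t - z t - s • ζ t‖ + ‖s • ζ t‖ := norm_le_norm_sub_add _ _
    _ ≤ C * |s| + |s| * M := by
      rw [norm_smul, Real.norm_eq_abs]
      gcongr
      exacts [hs t ht, hζ t ht]
    _ ≤ ε := hsε.le

theorem exists_contDiff_hasCompactSupport_eqOn {X Y : Type*}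
    [NormedAddCommGroup X] [NormedSpace ℝ X] [FiniteDimensional ℝ X]
    [NormedAddCommGroup Y] [NormedSpace ℝ Y] {n : ℕ∞} {f : X → Y} (hf : ContDiff ℝ n f)
    {S : Set X} (hS : IsCompact S) :
    ∃ g : X → Y, ContDiff ℝ n g ∧ HasCompactSupport g ∧ EqOn g f S := by
  obtain ⟨R, hR, hSR⟩ := hS.isBounded.subset_closedBall_lt 0 0
  let φ : ContDiffBump (0 : X) := ⟨R, R + 1, hR, lt_add_one R⟩
  refine ⟨fun p ↦ φ p • f p, φ.contDiff.smul hf, φ.hasCompactSupport.smul_right, fun p hp ↦ ?_⟩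
  simp [φ.one_of_mem_closedBall (hSR hp)]

theorem exists_parametrized_solution_hasDerivAt [FiniteDimensional ℝ E] (hab : a ≤ b)
    {G : ℝ × ℝ × E → E} (hG : ContDiff ℝ 1 G) {z ζ : ℝ → E}
    (hz : IsIntegralCurveOn z (fun t w ↦ G (0, t, w)) (Icc a b))
    (hζ : IsIntegralCurveOn ζ (fun t h ↦ fderiv ℝ G (0, t, z t) (1, 0, h)) (Icc a b))
    (hζa : ζ a = 0) :
    ∃ W : ℝ → ℝ → E,
      (∀ᶠ s in 𝓝 0, W s a = z a ∧ ∀ t ∈ Icc a b, HasDerivAt (W s) (G (s, t, W s t)) t) ∧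
      ∀ t ∈ Icc a b, W 0 t = z t ∧ HasDerivAt (fun s ↦ W s t) (ζ t) 0 := by
  set Γ : Set (ℝ × ℝ × E) := (fun t ↦ (0, t, z t)) '' Icc a b
  have hΓ : IsCompact Γ := by
    have := hz.continuousOn
    exact isCompact_Icc.image_of_continuousOn (by fun_prop)
  have mem_Γ {t : ℝ} (ht : t ∈ Icc a b) : (0, t, z t) ∈ Γ := mem_image_of_mem _ ht
  -- Cutting `G` off outside a neighbourhood of the graph of `z` makes every solution global.
  obtain ⟨H, hH, hH_supp, hHG⟩ :=
    exists_contDiff_hasCompactSupport_eqOn (n := 1) hG (hΓ.cthickening (r := 1))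
  have hH_eq {t : ℝ} (ht : t ∈ Icc a b) : H =ᶠ[𝓝 (0, t, z t)] G :=
    hHG.eventuallyEq_of_mem (mem_of_superset (closedBall_mem_nhds _ one_pos)
      (closedBall_subset_cthickening (mem_Γ ht) 1))
  obtain ⟨K, hK⟩ := ContDiff.lipschitzWith_of_hasCompactSupport hH_supp hH one_ne_zero
  obtain ⟨C, hC⟩ := hH_supp.exists_bound_of_continuous hH.continuous
  have hC' (p) : ‖H p‖ ≤ C.toNNReal := (hC p).trans (Real.le_coe_toNNReal C)
  have hsol (s : ℝ) := exists_forall_mem_Icc_hasDerivAt_of_lipschitzWith hab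
    (f := fun t w ↦ H (s, t, w)) (fun w ↦ hH.continuous.comp (by fun_prop))
    (fun t ↦ by simpa using! hK.comp ((LipschitzWith.prodMk_left s).comp
      (LipschitzWith.prodMk_left t))) (fun t w ↦ hC' _) (z a)
  choose W hWa hW using hsol
  have happrox {c : ℝ} (hc : 0 < c) :
      ∀ᶠ s in 𝓝 (0 : ℝ), ∀ t ∈ Icc a b, ‖W s t - z t - s • ζ t‖ ≤ c * |s| := by
    refine eventually_forall_norm_sub_sub_smul_le hH hK (fun t ht ↦ ?_) (fun t ht ↦ ?_) hζa hWa
      (fun s t ht ↦ (hW s t ht).hasDerivWithinAt) hc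
    · simpa only [(hH_eq ht).eq_of_nhds] using hz t ht
    · simpa only [(hH_eq ht).fderiv_eq] using hζ t ht
  have hW0 {t : ℝ} (ht : t ∈ Icc a b) : W 0 t = z t := by
    simpa [sub_eq_zero] using (happrox one_pos).self_of_nhds t ht
  refine ⟨W, ?_, fun t ht ↦ ⟨hW0 ht, ?_⟩⟩
  · obtain ⟨M, hM⟩ := isCompact_Icc.exists_bound_of_continuousOn hζ.continuousOn
    filter_upwards [closedBall_mem_nhds 0 one_pos,
      eventually_forall_norm_sub_le_of_norm_sub_sub_smul_le (happrox one_pos) hM one_pos]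
      with s hs hWz
    refine ⟨hWa s, fun t ht ↦ ?_⟩
    have hdist : dist (s, t, W s t) (0, t, z t) ≤ 1 := by
      simpa [Prod.dist_eq, dist_eq_norm] using And.intro hs (hWz t ht)
    rw [← hHG (mem_cthickening_of_dist_le _ _ _ _ (mem_Γ ht) hdist)]
    exact hW s t ht
  · rw [hasDerivAt_iff_isLittleO_nhds_zero, Asymptotics.isLittleO_iff]
    intro c hc
    filter_upwards [happrox hc] with s hs
    simpa [hW0 ht] using hs t ht

end ParametricODE

section FirstVariation

variable {p g : ℝ → ℝ} {a b : ℝ}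

/-- The integrating factor `t ↦ exp (-∫ₐᵗ p)`, which is the function `λ` of Herglotz' variational
problem when `p` is `∂L/∂z` along a trajectory. -/
noncomputable def herglotzMultiplier (p : ℝ → ℝ) (a t : ℝ) : ℝ :=
  Real.exp (-∫ s in a..t, p s)

theorem herglotzMultiplier_pos (p : ℝ → ℝ) (a t : ℝ) : 0 < herglotzMultiplier p a t :=
  Real.exp_pos _

theorem hasDerivWithinAt_integral_of_continuousOn {E : Type*} [NormedAddCommGroup E]
    [NormedSpace ℝ E] [CompleteSpace E] {f : ℝ → E} (hf : ContinuousOn f (Icc a b)) {t : ℝ}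
    (ht : t ∈ Icc a b) : HasDerivWithinAt (fun t ↦ ∫ s in a..t, f s) (f t) (Icc a b) t := by
  have : Fact (t ∈ Icc a b) := ⟨ht⟩
  exact intervalIntegral.integral_hasDerivWithinAt_right
    ((hf.mono (Icc_subset_Icc_right ht.2)).intervalIntegrable_of_Icc ht.1)
    (hf.stronglyMeasurableAtFilter_nhdsWithin measurableSet_Icc t) (hf t ht)

theorem hasDerivWithinAt_herglotzMultiplier (hp : ContinuousOn p (Icc a b)) {t : ℝ}
    (ht : t ∈ Icc a b) :
    HasDerivWithinAt (herglotzMultiplier p a) (-(p t * herglotzMultiplier p a t)) (Icc a b) t :=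
  (hasDerivWithinAt_integral_of_continuousOn hp ht).neg.exp.congr_deriv
    (by simp only [herglotzMultiplier, Pi.neg_apply]; ring)

theorem continuousOn_herglotzMultiplier (hp : ContinuousOn p (Icc a b)) :
    ContinuousOn (herglotzMultiplier p a) (Icc a b) :=
  HasDerivWithinAt.continuousOn fun _ ht ↦ hasDerivWithinAt_herglotzMultiplier hp ht

theorem hasDerivWithinAt_herglotzMultiplier_mul (hp : ContinuousOn p (Icc a b)) {f : ℝ → ℝ}
    {f' t : ℝ} (ht : t ∈ Icc a b) (hf : HasDerivWithinAt f f' (Icc a b) t) :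
    HasDerivWithinAt (fun t ↦ herglotzMultiplier p a t * f t)
      (herglotzMultiplier p a t * (f' - p t * f t)) (Icc a b) t :=
  ((hasDerivWithinAt_herglotzMultiplier hp ht).mul hf).congr_deriv (by ring)

theorem isIntegralCurveOn_inv_herglotzMultiplier_mul_integral (hp : ContinuousOn p (Icc a b))
    (hg : ContinuousOn g (Icc a b)) :
    IsIntegralCurveOn
      (fun t ↦ (herglotzMultiplier p a t)⁻¹ * ∫ s in a..t, herglotzMultiplier p a s * g s)
      (fun t h ↦ g t + p t * h) (Icc a b) := by
  intro t ht
  have hne := (herglotzMultiplier_pos p a t).ne'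
  refine (((hasDerivWithinAt_herglotzMultiplier hp ht).inv hne).mul
    (hasDerivWithinAt_integral_of_continuousOn
      ((continuousOn_herglotzMultiplier hp).mul hg) ht)).congr_deriv ?_
  simp only [Pi.inv_apply, Pi.mul_apply]
  field_simp
  ring

variable {V : Type*} [NormedAddCommGroup V] [NormedSpace ℝ V] {F : ℝ × V × ℝ → ℝ} {u v : ℝ → V}
  {z : ℝ → ℝ}

theorem continuousOn_fderiv_apply_along (hF : ContDiff ℝ 1 F) (hu : Continuous u)
    (hz : ContinuousOn z (Icc a b)) {h : ℝ → ℝ × V × ℝ} (hh : Continuous h) :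
    ContinuousOn (fun t ↦ fderiv ℝ F (t, u t, z t) (h t)) (Icc a b) :=
  ((hF.continuous_fderiv one_ne_zero).comp_continuousOn
    (continuousOn_id.prodMk (hu.continuousOn.prodMk hz))).clm_apply hh.continuousOn

theorem exists_variation_hasDerivAt (hab : a ≤ b) (hF : ContDiff ℝ 1 F) (hu : ContDiff ℝ 1 u)
    (hv : ContDiff ℝ 1 v) (hz : IsIntegralCurveOn z (fun t w ↦ F (t, u t, w)) (Icc a b))
    (hp : ∀ t ∈ Icc a b, p t = fderiv ℝ F (t, u t, z t) (0, 0, 1)) :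
    ∃ W : ℝ → ℝ → ℝ,
      (∀ᶠ s in 𝓝 0, W s a = z a ∧ ∀ t ∈ Icc a b, HasDerivAt (W s) (F (t, u t + s • v t, W s t)) t) ∧
      W 0 b = z b ∧
      HasDerivAt (fun s ↦ W s b) ((herglotzMultiplier p a b)⁻¹ *
        ∫ t in a..b, herglotzMultiplier p a t * fderiv ℝ F (t, u t, z t) (0, v t, 0)) 0 := by
  have hp_cont : ContinuousOn p (Icc a b) :=
    (continuousOn_fderiv_apply_along hF hu.continuous hz.continuousOn continuous_const).congr hp
  have hg_cont : ContinuousOn (fun t ↦ fderiv ℝ F (t, u t, z t) (0, v t, 0)) (Icc a b) :=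
    continuousOn_fderiv_apply_along hF hu.continuous hz.continuousOn
      (continuous_const.prodMk (hv.continuous.prodMk continuous_const))
  set G : ℝ × ℝ × ℝ → ℝ := fun q ↦ F (q.2.1, u q.2.1 + q.1 • v q.2.1, q.2.2)
  have hG : ContDiff ℝ 1 G := hF.comp (by fun_prop)
  have hG_fderiv {t : ℝ} (ht : t ∈ Icc a b) (h : ℝ) : fderiv ℝ G (0, t, z t) (1, 0, h) =
      fderiv ℝ F (t, u t, z t) (0, v t, 0) + p t * h := calc
    fderiv ℝ G (0, t, z t) (1, 0, h) = lineDeriv ℝ F (t, u t, z t) (0, v t, h) := by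
      rw [← (hG.differentiable one_ne_zero _).lineDeriv_eq_fderiv]
      simp [lineDeriv, G]
    _ = fderiv ℝ F (t, u t, z t) ((0, v t, 0) + h • (0, 0, 1)) := by
      rw [(hF.differentiable one_ne_zero _).lineDeriv_eq_fderiv]
      simp
    _ = fderiv ℝ F (t, u t, z t) (0, v t, 0) + p t * h := by
      rw [map_add, map_smul, ← hp t ht, smul_eq_mul, mul_comm]
  have hζ := isIntegralCurveOn_inv_herglotzMultiplier_mul_integral hp_cont hg_cont
  obtain ⟨W, hW, hW_deriv⟩ := exists_parametrized_solution_hasDerivAt (z := z) hab hG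
    (by simpa [G] using hz) (fun t ht ↦ (hζ t ht).congr_deriv (hG_fderiv ht _).symm) (by simp)
  exact ⟨W, hW, hW_deriv b (right_mem_Icc.2 hab)⟩

theorem integral_herglotzMultiplier_mul_eq_zero_of_isExtrOn (hab : a ≤ b) (hF : ContDiff ℝ 1 F)
    (hu : ContDiff ℝ 1 u) (hv : ContDiff ℝ 1 v)
    (hz : IsIntegralCurveOn z (fun t w ↦ F (t, u t, w)) (Icc a b))
    (hp : ∀ t ∈ Icc a b, p t = fderiv ℝ F (t, u t, z t) (0, 0, 1))
    (hext : IsExtrOn (fun q : ℝ × (ℝ → ℝ) ↦ q.2 b) {q | q.2 a = z a ∧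
      ∀ t ∈ Icc a b, HasDerivAt q.2 (F (t, u t + q.1 • v t, q.2 t)) t} (0, z)) :
    ∫ t in a..b, herglotzMultiplier p a t * fderiv ℝ F (t, u t, z t) (0, v t, 0) = 0 := by
  obtain ⟨W, hW, hW0, hW_deriv⟩ := exists_variation_hasDerivAt hab hF hu hv hz hp
  have hextr : IsLocalExtr (fun s ↦ W s b) 0 := by
    refine hext.imp (fun hmin ↦ ?_) (fun hmax ↦ ?_)
    · filter_upwards [hW] with s hs
      exact hW0.trans_le (hmin (a := (s, W s)) hs)
    · filter_upwards [hW] with s hs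
      exact (hmax (a := (s, W s)) hs).trans_eq hW0.symm
  exact (mul_eq_zero.1 (hextr.hasDerivAt_eq_zero hW_deriv)).resolve_left
    (inv_ne_zero (herglotzMultiplier_pos p a b).ne')

end FirstVariation

section FundamentalLemma

variable {E : Type*} [NormedAddCommGroup E] [NormedSpace ℝ E] [CompleteSpace E] {a b : ℝ}

theorem eqOn_zero_of_forall_integral_contDiff_smul_eq_zero (hab : a < b) {f : ℝ → E}
    (hf : ContinuousOn f (Icc a b))
    (h : ∀ η : ℝ → ℝ, ContDiff ℝ ∞ η → tsupport η ⊆ Ioo a b → ∫ t in a..b, η t • f t = 0) :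
    EqOn f 0 (Icc a b) := by
  have hae : ∀ᵐ t, t ∈ Ioo a b → f t = 0 := by
    refine isOpen_Ioo.ae_eq_zero_of_integral_contDiff_smul_eq_zero
      ((hf.mono Ioo_subset_Icc_self).locallyIntegrableOn measurableSet_Ioo)
      fun η hη _ hη_supp ↦ ?_
    rw [← h η hη hη_supp, intervalIntegral.integral_of_le hab.le,
      setIntegral_eq_integral_of_forall_compl_eq_zero]
    intro t ht
    rw [image_eq_zero_of_notMem_tsupport fun hmem ↦ ht (Ioo_subset_Ioc_self (hη_supp hmem)),
      zero_smul]
  refine Measure.eqOn_Icc_of_ae_eq volume hab.ne ?_ hf continuousOn_const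
  rw [← restrict_Ioo_eq_restrict_Icc]
  exact (ae_restrict_iff' measurableSet_Ioo).2 hae

theorem integral_smul_deriv_eq_neg_of_tsupport_subset_Ioo (hab : a ≤ b) {η : ℝ → ℝ}
    (hη : ContDiff ℝ 1 η) (hη_supp : tsupport η ⊆ Ioo a b) {f f' : ℝ → E}
    (hf : ∀ t ∈ Icc a b, HasDerivWithinAt f (f' t) (Icc a b) t)
    (hf' : ContinuousOn f' (Icc a b)) :
    ∫ t in a..b, η t • f' t = -∫ t in a..b, deriv η t • f t := by
  have hηa : η a = 0 := image_eq_zero_of_notMem_tsupport fun ha ↦ (hη_supp ha).1.false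
  have hηb : η b = 0 := image_eq_zero_of_notMem_tsupport fun hb ↦ (hη_supp hb).2.false
  rw [← uIcc_of_le hab] at hf hf'
  rw [intervalIntegral.integral_smul_deriv_eq_deriv_smul_of_hasDerivWithinAt
    (fun t _ ↦ (hη.differentiable one_ne_zero t).hasDerivAt.hasDerivWithinAt) hf
    ((hη.continuous_deriv le_rfl).intervalIntegrable a b) hf'.intervalIntegrable]
  simp [hηa, hηb]

theorem eqOn_zero_of_forall_integral_smul_add_deriv_smul_eq_zero (hab : a < b)
    {A B B' C C' C'' : ℝ → E}
    (hA : ContinuousOn A (Icc a b))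
    (hB : ∀ t ∈ Icc a b, HasDerivWithinAt B (B' t) (Icc a b) t) (hB' : ContinuousOn B' (Icc a b))
    (hC : ∀ t ∈ Icc a b, HasDerivWithinAt C (C' t) (Icc a b) t)
    (hC' : ∀ t ∈ Icc a b, HasDerivWithinAt C' (C'' t) (Icc a b) t)
    (hC'' : ContinuousOn C'' (Icc a b))
    (h : ∀ η : ℝ → ℝ, ContDiff ℝ ∞ η → tsupport η ⊆ Ioo a b →
      ∫ t in a..b, (η t • A t + deriv η t • B t + iteratedDeriv 2 η t • C t) = 0) :
    EqOn (fun t ↦ A t - B' t + C'' t) 0 (Icc a b) := by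
  refine eqOn_zero_of_forall_integral_contDiff_smul_eq_zero hab ((hA.sub hB').add hC'')
    fun η hη hη_supp ↦ ?_
  have hη' : ContDiff ℝ ∞ (deriv η) := hη.deriv'
  have hη'_supp : tsupport (deriv η) ⊆ Ioo a b := tsupport_deriv_subset.trans hη_supp
  have hη'' : iteratedDeriv 2 η = deriv (deriv η) := by rw [iteratedDeriv_succ, iteratedDeriv_one]
  have parts_B := integral_smul_deriv_eq_neg_of_tsupport_subset_Ioo hab.le
    (hη.of_le (by simp)) hη_supp hB hB'
  have parts_C := integral_smul_deriv_eq_neg_of_tsupport_subset_Ioo hab.le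
    (hη'.of_le (by simp)) hη'_supp hC (HasDerivWithinAt.continuousOn hC')
  have parts_C' := integral_smul_deriv_eq_neg_of_tsupport_subset_Ioo hab.le
    (hη.of_le (by simp)) hη_supp hC' hC''
  have integrable {φ : ℝ → ℝ} {f : ℝ → E} (hφ : Continuous φ) (hf : ContinuousOn f (Icc a b)) :
      IntervalIntegrable (fun t ↦ φ t • f t) volume a b :=
    (hφ.continuousOn.smul hf).intervalIntegrable_of_Icc hab.le
  have iA := integrable hη.continuous hA
  have iB := integrable hη'.continuous (HasDerivWithinAt.continuousOn hB)
  have iC := integrable (hη'.continuous_deriv (by simp)) (HasDerivWithinAt.continuousOn hC)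
  calc ∫ t in a..b, η t • (A t - B' t + C'' t)
      = (∫ t in a..b, η t • A t) - (∫ t in a..b, η t • B' t) + ∫ t in a..b, η t • C'' t := by
        simp only [smul_add, smul_sub]
        rw [intervalIntegral.integral_add (iA.sub (integrable hη.continuous hB'))
          (integrable hη.continuous hC''),
          intervalIntegral.integral_sub iA (integrable hη.continuous hB')]
    _ = (∫ t in a..b, η t • A t) + (∫ t in a..b, deriv η t • B t)
          + ∫ t in a..b, deriv (deriv η) t • C t := by
        rw [parts_B, parts_C', parts_C, sub_neg_eq_add, neg_neg]
    _ = 0 := by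
        rw [← h η hη hη_supp, hη'', intervalIntegral.integral_add (iA.add iB) iC,
          intervalIntegral.integral_add iA iB]

end FundamentalLemma

section SecondJet

variable {E : Type*} [NormedAddCommGroup E] [NormedSpace ℝ E]

/-- The jet `(x, ẋ, ẍ)` of a curve, grouped into one argument so that a second-order Lagrangian
becomes a function on `ℝ × (E × E × E) × ℝ`. -/
noncomputable def secondJet (x : ℝ → E) (t : ℝ) : E × E × E :=
  (x t, deriv x t, iteratedDeriv 2 x t)

theorem contDiff_secondJet {x : ℝ → E} (hx : ContDiff ℝ 3 x) : ContDiff ℝ 1 (secondJet x) := by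
  have h₁ : ContDiff ℝ 2 (deriv x) := ContDiff.deriv' hx
  have h₂ : ContDiff ℝ 1 (iteratedDeriv 2 x) := by
    rw [iteratedDeriv_eq_iterate]
    exact hx.iterate_deriv' 1 2
  exact (hx.of_le (by norm_num)).prodMk ((h₁.of_le (by norm_num)).prodMk h₂)

theorem secondJet_add_smul {x y : ℝ → E} (hx : ContDiff ℝ 2 x) (hy : ContDiff ℝ 2 y) (s t : ℝ) :
    secondJet (x + s • y) t = secondJet x t + s • secondJet y t := by
  have hdx := hx.differentiable two_ne_zero t
  have hdy := hy.differentiable two_ne_zero t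
  have hdd : iteratedDeriv 2 (x + s • y) t = iteratedDeriv 2 x t + s • iteratedDeriv 2 y t :=
    (iteratedDeriv_add hx.contDiffAt (hy.const_smul s).contDiffAt).trans
      (congrArg _ (iteratedDeriv_const_smul hy.contDiffAt s))
  simp [secondJet, deriv_add hdx (hdy.const_smul s), deriv_const_smul s hdy, hdd]

theorem secondJet_smul_const {η : ℝ → ℝ} (hη : ContDiff ℝ 2 η) (e : E) (t : ℝ) :
    secondJet (fun t ↦ η t • e) t = (η t • e, deriv η t • e, iteratedDeriv 2 η t • e) := by
  simp [secondJet, deriv_smul_const (hη.differentiable two_ne_zero t),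
    iteratedDeriv_smul_const hη.contDiffAt e]

/-- The Lagrangian `L(t, x, ẋ, ẍ, z)` as a function of `t`, the second jet of `x`, and `z`. -/
def jetLagrangian (L : ℝ → E → E → E → ℝ → ℝ) (q : ℝ × (E × E × E) × ℝ) : ℝ :=
  L q.1 q.2.1.1 q.2.1.2.1 q.2.1.2.2 q.2.2

variable {L : ℝ → E → E → E → ℝ → ℝ}

theorem fderiv_jetLagrangian_apply_jet {t r : ℝ} {x₀ x₁ x₂ : E}
    (hL : DifferentiableAt ℝ (jetLagrangian L) (t, (x₀, x₁, x₂), r)) (α β δ : ℝ) (e : E) :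
    fderiv ℝ (jetLagrangian L) (t, (x₀, x₁, x₂), r) (0, (α • e, β • e, δ • e), 0) =
      α * lineDeriv ℝ (fun u ↦ L t u x₁ x₂ r) x₀ e + β * lineDeriv ℝ (fun u ↦ L t x₀ u x₂ r) x₁ e +
        δ * lineDeriv ℝ (fun u ↦ L t x₀ x₁ u r) x₂ e := by
  have hsplit : ((0, (α • e, β • e, δ • e), 0) : ℝ × (E × E × E) × ℝ) =
      α • (0, (e, 0, 0), 0) + β • (0, (0, e, 0), 0) + δ • (0, (0, 0, e), 0) := by simp
  rw [hsplit]
  simp only [map_add, map_smul, smul_eq_mul]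
  simp only [← hL.lineDeriv_eq_fderiv]
  simp [lineDeriv, jetLagrangian]

theorem lineDeriv_one_eq_deriv {F : Type*} [NormedAddCommGroup F] [NormedSpace ℝ F] (f : ℝ → F)
    (x : ℝ) : lineDeriv ℝ f x 1 = deriv f x := by
  simp [lineDeriv, deriv_comp_const_add]

theorem fderiv_jetLagrangian_apply_z {t r : ℝ} {j : E × E × E}
    (hL : DifferentiableAt ℝ (jetLagrangian L) (t, j, r)) :
    fderiv ℝ (jetLagrangian L) (t, j, r) (0, 0, 1) = deriv (fun u ↦ L t j.1 j.2.1 j.2.2 u) r := by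
  rw [← hL.lineDeriv_eq_fderiv, ← lineDeriv_one_eq_deriv]
  simp [lineDeriv, jetLagrangian]

end SecondJet

section EulerLagrange

variable {E : Type*} [NormedAddCommGroup E] [NormedSpace ℝ E]

/-- The pairs `(y, w)` competing in Herglotz' problem: `ẇ = L(t, y, ẏ, ÿ, w)` on `[a, b]`,
`w a = γ`, and `y` is a `C^n` curve with the same clamped boundary data as `x`. -/
def herglotzAdmissible (L : ℝ → E → E → E → ℝ → ℝ) (n : WithTop ℕ∞) (a b γ : ℝ) (x : ℝ → E) :
    Set ((ℝ → E) × (ℝ → ℝ)) :=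
  {q | ContDiff ℝ n q.1 ∧ q.1 a = x a ∧ deriv q.1 a = deriv x a ∧
    q.1 b = x b ∧ deriv q.1 b = deriv x b ∧
    (∀ t ∈ Icc a b, HasDerivAt q.2
      (L t (q.1 t) (deriv q.1 t) (iteratedDeriv 2 q.1 t) (q.2 t)) t) ∧ q.2 a = γ}

variable {L : ℝ → E → E → E → ℝ → ℝ} {n : WithTop ℕ∞} {a b : ℝ} {x : ℝ → E} {z : ℝ → ℝ} {e : E}
  {Lx Lv Lw Lz : ℝ → ℝ}

theorem add_smul_mem_herglotzAdmissible (hn : 2 ≤ n) (hx : ContDiff ℝ n x) {y : ℝ → E}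
    (hy : ContDiff ℝ n y) (hya : a ∉ tsupport y) (hyb : b ∉ tsupport y) {s : ℝ} {w : ℝ → ℝ}
    (hw : ∀ t ∈ Icc a b,
      HasDerivAt w (jetLagrangian L (t, secondJet x t + s • secondJet y t, w t)) t) :
    (x + s • y, w) ∈ herglotzAdmissible L n a b (w a) x := by
  have hjet (t) := secondJet_add_smul (hx.of_le hn) (hy.of_le hn) s t
  have hjet_eq {t : ℝ} (ht : t ∉ tsupport y) :
      (x + s • y) t = x t ∧ deriv (x + s • y) t = deriv x t := by
    have hy0 : y t = 0 := image_eq_zero_of_notMem_tsupport ht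
    have hy0' : deriv y t = 0 :=
      image_eq_zero_of_notMem_tsupport fun h ↦ ht (tsupport_deriv_subset h)
    exact ⟨by simp [hy0],
      by simpa [secondJet, hy0'] using congrArg (fun j ↦ j.2.1) (hjet t)⟩
  refine ⟨hx.add (hy.const_smul s), (hjet_eq hya).1, (hjet_eq hya).2, (hjet_eq hyb).1,
    (hjet_eq hyb).2, fun t ht ↦ ?_, rfl⟩
  have := hw t ht
  rwa [← hjet] at this

theorem integral_herglotzMultiplier_mul_fderiv_jetLagrangian_eq_zero (hab : a ≤ b)
    (hL : ContDiff ℝ 1 (jetLagrangian L)) (hn : 3 ≤ n) (hx : ContDiff ℝ n x)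
    (hz : IsIntegralCurveOn z (fun t w ↦ jetLagrangian L (t, secondJet x t, w)) (Icc a b))
    (hLz : ∀ t ∈ Icc a b,
      Lz t = deriv (fun u ↦ L t (x t) (deriv x t) (iteratedDeriv 2 x t) u) (z t))
    (hext : IsExtrOn (fun q ↦ q.2 b) (herglotzAdmissible L n a b (z a) x) (x, z))
    {y : ℝ → E} (hy : ContDiff ℝ n y) (hya : a ∉ tsupport y) (hyb : b ∉ tsupport y) :
    ∫ t in a..b, herglotzMultiplier Lz a t *
      fderiv ℝ (jetLagrangian L) (t, secondJet x t, z t) (0, secondJet y t, 0) = 0 := by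
  refine integral_herglotzMultiplier_mul_eq_zero_of_isExtrOn hab hL
    (contDiff_secondJet (hx.of_le hn)) (contDiff_secondJet (hy.of_le hn)) hz (fun t ht ↦ ?_) ?_
  · rw [hLz t ht, fderiv_jetLagrangian_apply_z (hL.differentiable one_ne_zero _)]
    rfl
  · refine hext.comp_mapsTo (g := fun q : ℝ × (ℝ → ℝ) ↦ (x + q.1 • y, q.2)) (fun q hq ↦ ?_)
      (by simp)
    exact hq.1 ▸ add_smul_mem_herglotzAdmissible (le_trans (by norm_num) hn) hx hy hya hyb hq.2

theorem euler_lagrange_of_forall_integral_herglotzMultiplier_mul_eq_zero (hab : a < b)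
    (hLx : ContinuousOn Lx (Icc a b)) (hLv : ContDiff ℝ 1 Lv) (hLw : ContDiff ℝ 2 Lw)
    (hLz : ContDiff ℝ 1 Lz)
    (h : ∀ η : ℝ → ℝ, ContDiff ℝ ∞ η → tsupport η ⊆ Ioo a b →
      ∫ t in a..b, herglotzMultiplier Lz a t *
        (η t * Lx t + deriv η t * Lv t + iteratedDeriv 2 η t * Lw t) = 0) :
    ∀ t ∈ Icc a b,
      Lx t + Lz t * Lv t - deriv Lv t + (Lz t) ^ 2 * Lw t
        - 2 * Lz t * deriv Lw t - deriv Lz t * Lw t + deriv (deriv Lw) t = 0 := by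
  have hLw' : ContDiff ℝ 1 (deriv Lw) := ContDiff.deriv' hLw
  have hLv_deriv (t) := (hLv.differentiable one_ne_zero t).hasDerivAt
  have hLw_deriv (t) := (hLw.differentiable two_ne_zero t).hasDerivAt
  have hLw'_deriv (t) := (hLw'.differentiable one_ne_zero t).hasDerivAt
  have hLz_deriv (t) := (hLz.differentiable one_ne_zero t).hasDerivAt
  have := hLv.continuous
  have := hLw.continuous
  have := hLz.continuous
  have := hLv.continuous_deriv le_rfl
  have := hLw'.continuous
  have := hLw'.continuous_deriv le_rfl
  have := hLz.continuous_deriv le_rfl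
  have hm := continuousOn_herglotzMultiplier hLz.continuous.continuousOn (a := a) (b := b)
  have hm_mul {f : ℝ → ℝ} {f' t : ℝ} (ht : t ∈ Icc a b) (hf : HasDerivAt f f' t) :=
    hasDerivWithinAt_herglotzMultiplier_mul hLz.continuous.continuousOn ht hf.hasDerivWithinAt
  have hEL := eqOn_zero_of_forall_integral_smul_add_deriv_smul_eq_zero hab
    (hm.mul hLx)
    (fun t ht ↦ hm_mul ht (hLv_deriv t)) (hm.mul (Continuous.continuousOn (by fun_prop)))
    (fun t ht ↦ hm_mul ht (hLw_deriv t))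
    (fun t ht ↦ hm_mul ht ((hLw'_deriv t).sub ((hLz_deriv t).mul (hLw_deriv t))))
    (hm.mul (Continuous.continuousOn (by fun_prop)))
    (fun η hη hη_supp ↦ (intervalIntegral.integral_congr fun t _ ↦ by
      simp only [Pi.mul_apply, smul_eq_mul]; ring).trans (h η hη hη_supp))
  intro t ht
  refine (mul_eq_zero.1 ?_).resolve_left (herglotzMultiplier_pos Lz a t).ne'
  refine Eq.trans ?_ (hEL ht)
  simp only [Pi.mul_apply]
  ring

theorem herglotz_euler_lagrange_second_order_general (hab : a < b)
    (hL : ContDiff ℝ 1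
      fun p : ℝ × E × E × E × ℝ ↦ L p.1 p.2.1 p.2.2.1 p.2.2.2.1 p.2.2.2.2)
    (hn : 3 ≤ n) (hn' : n ≤ ∞) (hx : ContDiff ℝ n x)
    (hz : IsIntegralCurveOn z
      (fun t w ↦ L t (x t) (deriv x t) (iteratedDeriv 2 x t) w) (Icc a b))
    (hLx : ∀ t ∈ Icc a b,
      Lx t = lineDeriv ℝ (fun u ↦ L t u (deriv x t) (iteratedDeriv 2 x t) (z t)) (x t) e)
    (hLv : ∀ t ∈ Icc a b,
      Lv t = lineDeriv ℝ (fun u ↦ L t (x t) u (iteratedDeriv 2 x t) (z t)) (deriv x t) e)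
    (hLw : ∀ t ∈ Icc a b,
      Lw t = lineDeriv ℝ (fun u ↦ L t (x t) (deriv x t) u (z t)) (iteratedDeriv 2 x t) e)
    (hLz : ∀ t ∈ Icc a b,
      Lz t = deriv (fun u ↦ L t (x t) (deriv x t) (iteratedDeriv 2 x t) u) (z t))
    (hLv1 : ContDiff ℝ 1 Lv) (hLw2 : ContDiff ℝ 2 Lw) (hLz1 : ContDiff ℝ 1 Lz)
    (hext : IsExtrOn (fun q ↦ q.2 b) (herglotzAdmissible L n a b (z a) x) (x, z)) :
    ∀ t ∈ Icc a b,
      Lx t + Lz t * Lv t - deriv Lv t + (Lz t) ^ 2 * Lw t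
        - 2 * Lz t * deriv Lw t - deriv Lz t * Lw t + deriv (deriv Lw) t = 0 := by
  have hL_jet : ContDiff ℝ 1 (jetLagrangian L) :=
    hL.comp (f := fun q : ℝ × (E × E × E) × ℝ ↦ (q.1, q.2.1.1, q.2.1.2.1, q.2.1.2.2, q.2.2))
      (by fun_prop)
  have hLx_cont : ContinuousOn Lx (Icc a b) := by
    refine (continuousOn_fderiv_apply_along hL_jet (contDiff_secondJet (hx.of_le hn)).continuous
      hz.continuousOn (continuous_const (y := (0, (e, 0, 0), 0)))).congr fun t ht ↦ ?_
    simpa [secondJet, hLx t ht] using (fderiv_jetLagrangian_apply_jet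
      (hL_jet.differentiable one_ne_zero (t, secondJet x t, z t)) 1 0 0 e).symm
  refine euler_lagrange_of_forall_integral_herglotzMultiplier_mul_eq_zero hab hLx_cont hLv1 hLw2
    hLz1 fun η hη hη_supp ↦ ?_
  have hy_supp : tsupport (fun t ↦ η t • e) ⊆ Ioo a b :=
    (tsupport_smul_subset_left η _).trans hη_supp
  rw [← integral_herglotzMultiplier_mul_fderiv_jetLagrangian_eq_zero hab.le hL_jet hn hx hz hLz hext
    (y := fun t ↦ η t • e) ((hη.smul contDiff_const).of_le hn') (fun h ↦ (hy_supp h).1.false)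
    (fun h ↦ (hy_supp h).2.false)]
  refine intervalIntegral.integral_congr fun t ht ↦ ?_
  rw [uIcc_of_le hab.le] at ht
  rw [secondJet_smul_const (contDiff_infty.1 hη 2) e t, secondJet,
    fderiv_jetLagrangian_apply_jet (hL_jet.differentiable one_ne_zero _), hLx t ht, hLv t ht,
    hLw t ht]

end EulerLagrange

/-- Second-order Herglotz Euler–Lagrange equation (the case n = 2). -/
theorem herglotz_euler_lagrange_second_order
    (a b γ : ℝ) (hab : a < b)
    (L : ℝ → ℝ → ℝ → ℝ → ℝ → ℝ)
    (hL : ContDiff ℝ 1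
      (fun p : ℝ × ℝ × ℝ × ℝ × ℝ => L p.1 p.2.1 p.2.2.1 p.2.2.2.1 p.2.2.2.2))
    (x z : ℝ → ℝ) (hx : ContDiff ℝ 4 x)
    (hz : ∀ t ∈ Set.Icc a b,
      HasDerivAt z (L t (x t) (deriv x t) (iteratedDeriv 2 x t) (z t)) t)
    (hza : z a = γ)
    -- partial derivatives of L along the trajectory
    (Lx Lv Lw Lz : ℝ → ℝ)
    (hLx : ∀ t, Lx t = deriv (fun u => L t u (deriv x t) (iteratedDeriv 2 x t) (z t)) (x t))
    (hLv : ∀ t, Lv t = deriv (fun u => L t (x t) u (iteratedDeriv 2 x t) (z t)) (deriv x t))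
    (hLw : ∀ t, Lw t = deriv (fun u => L t (x t) (deriv x t) u (z t)) (iteratedDeriv 2 x t))
    (hLz : ∀ t, Lz t = deriv (fun u => L t (x t) (deriv x t) (iteratedDeriv 2 x t) u) (z t))
    (hLv2 : ContDiff ℝ 2 Lv) (hLw2 : ContDiff ℝ 2 Lw) (hLz2 : ContDiff ℝ 2 Lz)
    -- x extremizes z(b) with x(a), ẋ(a), x(b), ẋ(b) fixed
    (hext :
      (∀ y w : ℝ → ℝ, ContDiff ℝ 4 y →
        y a = x a → deriv y a = deriv x a → y b = x b → deriv y b = deriv x b →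
        (∀ t ∈ Set.Icc a b,
          HasDerivAt w (L t (y t) (deriv y t) (iteratedDeriv 2 y t) (w t)) t) →
        w a = γ → z b ≤ w b) ∨
      (∀ y w : ℝ → ℝ, ContDiff ℝ 4 y →
        y a = x a → deriv y a = deriv x a → y b = x b → deriv y b = deriv x b →
        (∀ t ∈ Set.Icc a b,
          HasDerivAt w (L t (y t) (deriv y t) (iteratedDeriv 2 y t) (w t)) t) →
        w a = γ → w b ≤ z b)) :
    ∀ t ∈ Set.Icc a b,
      Lx t + Lz t * Lv t - deriv Lv t + (Lz t) ^ 2 * Lw t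
        - 2 * Lz t * deriv Lw t - deriv Lz t * Lw t + deriv (deriv Lw) t = 0 := by
  subst hza
  exact herglotz_euler_lagrange_second_order_general (n := 4) (e := 1) hab hL (by norm_num)
    ENat.LEInfty.out hx (fun t ht ↦ (hz t ht).hasDerivWithinAt)
    (fun t _ ↦ by rw [hLx, lineDeriv_one_eq_deriv])
    (fun t _ ↦ by rw [hLv, lineDeriv_one_eq_deriv])
    (fun t _ ↦ by rw [hLw, lineDeriv_one_eq_deriv])
    (fun t _ ↦ hLz t) (hLv2.of_le (by norm_num)) hLw2 (hLz2.of_le (by norm_num))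
    (hext.imp
      (fun h q ⟨hy, hya, hya', hyb, hyb', hw, hwa⟩ ↦ h q.1 q.2 hy hya hya' hyb hyb' hw hwa)
      (fun h q ⟨hy, hya, hya', hyb, hyb', hw, hwa⟩ ↦ h q.1 q.2 hy hya hya' hyb hyb' hw hwa))
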